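/- arXiv:2206.09908 — 2 statements merged into one kernel-verified Lean document; each statement's English description precedes it below -/
import Mathlib

section
/- Infinite-time unbiasedness of the NEIS estimator (Proposition 2.1, infinite-time case). Let U0, U1 : ℝ^d → ℝ be continuous with ∫_{ℝ^d} exp(−U0(x)) dx = 1 and Z1 := ∫_{ℝ^d} exp(−U1(x)) dx < ∞. Let b be an admissible vector field with global flow X and Jacobian factor J, and assume that for every t ∈ ℝ the map x ↦ X t x is continuously differentiable and satisfies det(D_x(X t ·)(x)) = J t x for all x. Assume moreover that there is an open set Ω₀ ⊆ ℝ^d whose complement has Lebesgue measure zero such that, for k = 0, 1, the functions z ↦ ∫_0^∞ F^k_t(z) dt and z ↦ ∫_{−∞}^0 F^k_t(z) dt are finite-valued and continuous on Ω₀. Then Z1 = ∫_{ℝ^d} exp(−U0(x)) · A(x) dx. -/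
open MeasureTheory Filter

noncomputable section

/-- Euclidean state space ℝ^d. -/
abbrev Euc (d : ℕ) := EuclideanSpace ℝ (Fin d)

/-- Divergence of a vector field: trace of the Fréchet derivative. -/
def vdiv {d : ℕ} (b : Euc d → Euc d) (x : Euc d) : ℝ :=
  LinearMap.trace ℝ (Euc d) (fderiv ℝ b x).toLinearMap

/-- A vector field is admissible if it is C¹ with globally bounded derivative. -/
def Admissible {d : ℕ} (b : Euc d → Euc d) : Prop :=
  ContDiff ℝ 1 b ∧ ∃ C : ℝ, ∀ x, ‖fderiv ℝ b x‖ ≤ C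

/-- A global flow of the vector field `b`. -/
def IsGlobalFlow {d : ℕ} (b : Euc d → Euc d) (X : ℝ → Euc d → Euc d) : Prop :=
  (∀ x, X 0 x = x) ∧
  (∀ t s : ℝ, ∀ x, X (t + s) x = X t (X s x)) ∧
  (∀ x : Euc d, ∀ t : ℝ, HasDerivAt (fun τ => X τ x) (b (X t x)) t)

/-- Jacobian factor of the flow: J t x = exp(∫₀ᵗ div b(X s x) ds). -/
def Jac {d : ℕ} (b : Euc d → Euc d) (X : ℝ → Euc d → Euc d) (t : ℝ) (x : Euc d) : ℝ :=
  Real.exp (∫ s in (0:ℝ)..t, vdiv b (X s x))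

/-!
Let `D = orbitIntegral ρ₀` be the integral of `ρ₀ = exp (-U₀)` along orbits, weighted by the
Jacobian. By the cocycle identity and translation invariance of time, `D (X s x) * J s x = D x`.
For any weight `φ` which, like `D⁻¹`, is multiplied by the Jacobian along the flow, the change of
variables `y = X t x` and Tonelli's theorem show that `(f, g) ↦ ∫ f φ (orbitIntegral g)` is
symmetric: time `t` on one side corresponds to time `-t` on the other. With `φ = D⁻¹`, `f = ρ₀` and
`g = ρ₁ = exp (-U₁)`, one side is the expectation of the estimator and the other is
`∫ ρ₁ D⁻¹ D = ∫ ρ₁`. Everything is nonnegative, so all this takes place in `ℝ≥0∞`.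
-/

open Function
open scoped ENNReal

section NonsingularAction

variable {G α : Type*} [AddGroup G] [MeasurableSpace G] [MeasurableSpace α]
  {μ : Measure α} {X : G → α → α} {J : G → α → ℝ≥0∞}

/-- A measurable action `X` of an additive group on a measure space `(α, μ)` that preserves the
class of `μ`, with Radon–Nikodym cocycle `J`. For a smooth flow and Lebesgue measure, `J t` is the
Jacobian determinant of `X t`. The identities for `X` and `J` hold everywhere, not just `μ`-almost
everywhere. -/
structure IsNonsingularAction (μ : Measure α) (X : G → α → α) (J : G → α → ℝ≥0∞) : Prop where
  zero_apply : ∀ x, X 0 x = x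
  add_apply : ∀ s t x, X (s + t) x = X s (X t x)
  measurable : Measurable (uncurry X)
  jacobian_zero : ∀ x, J 0 x = 1
  jacobian_add : ∀ s t x, J (s + t) x = J s (X t x) * J t x
  measurable_jacobian : Measurable (uncurry J)
  map_withDensity_jacobian : ∀ t, (μ.withDensity (J t)).map (X t) = μ

/-- The integral of `ρ` along the orbit of `x`, weighted by the Jacobian `J`. -/
def orbitIntegral (ν : Measure G) (X : G → α → α) (J : G → α → ℝ≥0∞) (ρ : α → ℝ≥0∞) (x : α) :
    ℝ≥0∞ :=
  ∫⁻ t, ρ (X t x) * J t x ∂ν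

namespace IsNonsingularAction

lemma neg_apply_apply (hX : IsNonsingularAction μ X J) (t : G) (x : α) : X (-t) (X t x) = x := by
  rw [← hX.add_apply, neg_add_cancel, hX.zero_apply]

lemma jacobian_neg_mul (hX : IsNonsingularAction μ X J) (t : G) (x : α) :
    J (-t) (X t x) * J t x = 1 := by
  rw [← hX.jacobian_add, neg_add_cancel, hX.jacobian_zero]

lemma jacobian_ne_zero (hX : IsNonsingularAction μ X J) (t : G) (x : α) : J t x ≠ 0 :=
  right_ne_zero_of_mul_eq_one (hX.jacobian_neg_mul t x)

lemma jacobian_ne_top (hX : IsNonsingularAction μ X J) (t : G) (x : α) : J t x ≠ ∞ := by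
  intro h
  have hmul := hX.jacobian_neg_mul t x
  rw [h, ENNReal.mul_top (left_ne_zero_of_mul_eq_one hmul)] at hmul
  exact ENNReal.top_ne_one hmul

lemma lintegral_comp_mul_jacobian (hX : IsNonsingularAction μ X J) (t : G) {g : α → ℝ≥0∞}
    (hg : Measurable g) : ∫⁻ x, g (X t x) * J t x ∂μ = ∫⁻ x, g x ∂μ := by
  have hXt : Measurable (X t) := hX.measurable.of_uncurry_left
  have hJt : Measurable (J t) := hX.measurable_jacobian.of_uncurry_left
  symm
  calc ∫⁻ x, g x ∂μ
      = ∫⁻ x, g (X t x) ∂μ.withDensity (J t) := by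
        rw [← lintegral_map hg hXt, hX.map_withDensity_jacobian]
    _ = ∫⁻ x, g (X t x) * J t x ∂μ := by
        simpa only [Pi.mul_apply, comp_apply, mul_comm] using
          lintegral_withDensity_eq_lintegral_mul μ hJt (hg.comp hXt)

lemma measurable_comp_mul_jacobian (hX : IsNonsingularAction μ X J) {ρ : α → ℝ≥0∞}
    (hρ : Measurable ρ) : Measurable fun p : α × G => ρ (X p.2 p.1) * J p.2 p.1 :=
  (hρ.comp (hX.measurable.comp measurable_swap)).mul (hX.measurable_jacobian.comp measurable_swap)

lemma measurable_comp_mul_jacobian_time (hX : IsNonsingularAction μ X J) {ρ : α → ℝ≥0∞}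
    (hρ : Measurable ρ) (x : α) : Measurable fun t => ρ (X t x) * J t x :=
  (hX.measurable_comp_mul_jacobian hρ).comp measurable_prodMk_left

lemma lintegral_mul_comp_mul_jacobian (hX : IsNonsingularAction μ X J) {f φ g : α → ℝ≥0∞}
    (hf : Measurable f) (hφ : Measurable φ) (hg : Measurable g)
    (hφX : ∀ t x, φ (X t x) = φ x * J t x) (t : G) :
    ∫⁻ x, f x * φ x * (g (X t x) * J t x) ∂μ =
      ∫⁻ y, g y * φ y * (f (X (-t) y) * J (-t) y) ∂μ := by
  have hXt : Measurable (X (-t)) := hX.measurable.of_uncurry_left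
  have hJt : Measurable (J (-t)) := hX.measurable_jacobian.of_uncurry_left
  rw [← hX.lintegral_comp_mul_jacobian t
    (g := fun y => g y * φ y * (f (X (-t) y) * J (-t) y)) (by fun_prop)]
  refine lintegral_congr fun x => ?_
  calc f x * φ x * (g (X t x) * J t x)
      = f x * φ x * (g (X t x) * J t x) * (J (-t) (X t x) * J t x) := by
        rw [hX.jacobian_neg_mul, mul_one]
    _ = g (X t x) * φ (X t x) * (f (X (-t) (X t x)) * J (-t) (X t x)) * J t x := by
        rw [hφX, hX.neg_apply_apply]
        ring

variable {ν : Measure G}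

lemma measurable_orbitIntegral [SFinite ν] (hX : IsNonsingularAction μ X J) {ρ : α → ℝ≥0∞}
    (hρ : Measurable ρ) : Measurable (orbitIntegral ν X J ρ) :=
  (hX.measurable_comp_mul_jacobian hρ).lintegral_prod_right'

lemma orbitIntegral_ne_zero [NeZero ν] (hX : IsNonsingularAction μ X J) {ρ : α → ℝ≥0∞}
    (hρ : Measurable ρ) (hρ0 : ∀ x, ρ x ≠ 0) (x : α) : orbitIntegral ν X J ρ x ≠ 0 := by
  intro h
  rw [orbitIntegral, lintegral_eq_zero_iff (hX.measurable_comp_mul_jacobian_time hρ x)] at h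
  obtain ⟨t, ht⟩ := h.exists
  exact mul_ne_zero (hρ0 _) (hX.jacobian_ne_zero t x) ht

lemma orbitIntegral_apply_mul_jacobian [MeasurableAdd G] [ν.IsAddRightInvariant]
    (hX : IsNonsingularAction μ X J) (ρ : α → ℝ≥0∞) (s : G) (x : α) :
    orbitIntegral ν X J ρ (X s x) * J s x = orbitIntegral ν X J ρ x := by
  simp only [orbitIntegral]
  rw [← lintegral_mul_const' _ _ (hX.jacobian_ne_top s x),
    ← lintegral_add_right_eq_self (fun t => ρ (X t x) * J t x) s]
  simp only [hX.add_apply, hX.jacobian_add, mul_assoc]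

lemma inv_orbitIntegral_apply [MeasurableAdd G] [ν.IsAddRightInvariant]
    (hX : IsNonsingularAction μ X J) (ρ : α → ℝ≥0∞) (s : G) (x : α) :
    (orbitIntegral ν X J ρ (X s x))⁻¹ = (orbitIntegral ν X J ρ x)⁻¹ * J s x := by
  have hJ0 := hX.jacobian_ne_zero s x
  have hJtop := hX.jacobian_ne_top s x
  rw [← hX.orbitIntegral_apply_mul_jacobian ρ s x, ENNReal.mul_inv (.inr hJtop) (.inr hJ0),
    mul_assoc, ENNReal.inv_mul_cancel hJ0 hJtop, mul_one]

lemma lintegral_mul_orbitIntegral [SFinite μ] [SFinite ν] (hX : IsNonsingularAction μ X J)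
    {f g : α → ℝ≥0∞} (hf : Measurable f) (hg : Measurable g) :
    ∫⁻ x, f x * orbitIntegral ν X J g x ∂μ =
      ∫⁻ t, ∫⁻ x, f x * (g (X t x) * J t x) ∂μ ∂ν := by
  have hgJ := hX.measurable_comp_mul_jacobian hg
  rw [← lintegral_lintegral_swap ((hf.comp measurable_fst).mul hgJ).aemeasurable]
  exact lintegral_congr fun x =>
    (lintegral_const_mul _ (hX.measurable_comp_mul_jacobian_time hg x)).symm

theorem lintegral_mul_orbitIntegral_comm [MeasurableNeg G] [SFinite μ] [SFinite ν]
    [ν.IsNegInvariant] (hX : IsNonsingularAction μ X J) {f φ g : α → ℝ≥0∞}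
    (hf : Measurable f) (hφ : Measurable φ) (hg : Measurable g)
    (hφX : ∀ t x, φ (X t x) = φ x * J t x) :
    ∫⁻ x, f x * φ x * orbitIntegral ν X J g x ∂μ =
      ∫⁻ x, g x * φ x * orbitIntegral ν X J f x ∂μ := by
  calc ∫⁻ x, f x * φ x * orbitIntegral ν X J g x ∂μ
      = ∫⁻ t, ∫⁻ x, f x * φ x * (g (X t x) * J t x) ∂μ ∂ν :=
        hX.lintegral_mul_orbitIntegral (hf.mul hφ) hg
    _ = ∫⁻ t, ∫⁻ x, g x * φ x * (f (X (-t) x) * J (-t) x) ∂μ ∂ν :=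
        lintegral_congr (hX.lintegral_mul_comp_mul_jacobian hf hφ hg hφX)
    _ = ∫⁻ t, ∫⁻ x, g x * φ x * (f (X t x) * J t x) ∂μ ∂ν :=
        lintegral_neg_eq_self fun t => ∫⁻ x, g x * φ x * (f (X t x) * J t x) ∂μ
    _ = ∫⁻ x, g x * φ x * orbitIntegral ν X J f x ∂μ :=
        (hX.lintegral_mul_orbitIntegral (hg.mul hφ) hf).symm

theorem lintegral_mul_orbitIntegral_div [MeasurableAdd G] [MeasurableNeg G] [SFinite μ]
    [SFinite ν] [ν.IsAddRightInvariant] [ν.IsNegInvariant] (hX : IsNonsingularAction μ X J)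
    {ρ₀ ρ₁ : α → ℝ≥0∞} (hρ₀ : Measurable ρ₀) (hρ₁ : Measurable ρ₁)
    (hD0 : ∀ᵐ x ∂μ, orbitIntegral ν X J ρ₀ x ≠ 0)
    (hDtop : ∀ᵐ x ∂μ, orbitIntegral ν X J ρ₀ x ≠ ∞) :
    ∫⁻ x, ρ₀ x * (orbitIntegral ν X J ρ₁ x / orbitIntegral ν X J ρ₀ x) ∂μ = ∫⁻ x, ρ₁ x ∂μ := by
  set D := orbitIntegral ν X J ρ₀
  calc ∫⁻ x, ρ₀ x * (orbitIntegral ν X J ρ₁ x / D x) ∂μ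
      = ∫⁻ x, ρ₀ x * (D x)⁻¹ * orbitIntegral ν X J ρ₁ x ∂μ := by
        simp only [div_eq_mul_inv, mul_comm, mul_left_comm]
    _ = ∫⁻ x, ρ₁ x * (D x)⁻¹ * D x ∂μ :=
        hX.lintegral_mul_orbitIntegral_comm hρ₀ (hX.measurable_orbitIntegral hρ₀).inv hρ₁
          (hX.inv_orbitIntegral_apply ρ₀)
    _ = ∫⁻ x, ρ₁ x ∂μ := lintegral_congr_ae <| by
        filter_upwards [hD0, hDtop] with x h0 htop
        rw [mul_assoc, ENNReal.inv_mul_cancel h0 htop, mul_one]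

section RealJacobian

variable {J : G → α → ℝ} {ρ : α → ℝ}

lemma integral_eq_toReal_orbitIntegral
    (hX : IsNonsingularAction μ X fun t x => ENNReal.ofReal (J t x)) (hρm : Measurable ρ)
    (hρ : ∀ x, 0 ≤ ρ x) (x : α) :
    ∫ t, ρ (X t x) * J t x ∂ν = (orbitIntegral ν X (fun t x => ENNReal.ofReal (J t x))
      (fun x => ENNReal.ofReal (ρ x)) x).toReal := by
  have hJ (t : G) : 0 < J t x := by simpa using hX.jacobian_ne_zero t x
  rw [orbitIntegral, ← integral_toReal
    (hX.measurable_comp_mul_jacobian_time hρm.ennreal_ofReal x).aemeasurable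
    (.of_forall fun t => ENNReal.mul_lt_top ENNReal.ofReal_lt_top ENNReal.ofReal_lt_top)]
  simp only [ENNReal.toReal_mul, ENNReal.toReal_ofReal (hρ _), ENNReal.toReal_ofReal (hJ _).le]

end RealJacobian

end IsNonsingularAction

end NonsingularAction

lemma orbitIntegral_ofReal_ne_top {G α : Type*} [MeasurableSpace G] {ν : Measure G}
    {X : G → α → α} {J : G → α → ℝ} {ρ : α → ℝ} (hρ : ∀ x, 0 ≤ ρ x) {x : α}
    (hint : Integrable (fun t => ρ (X t x) * J t x) ν) :
    orbitIntegral ν X (fun t x => ENNReal.ofReal (J t x)) (fun x => ENNReal.ofReal (ρ x)) x ≠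
      ∞ := by
  simpa only [orbitIntegral, ← ENNReal.ofReal_mul (hρ _)] using hint.lintegral_lt_top.ne

theorem stmt_1_general {G α : Type*} [AddGroup G] [MeasurableSpace G] [MeasurableAdd G]
    [MeasurableNeg G] [MeasurableSpace α] {μ : Measure α} [SFinite μ] {ν : Measure G} [SFinite ν]
    [NeZero ν] [ν.IsAddRightInvariant] [ν.IsNegInvariant] {X : G → α → α} {J : G → α → ℝ}
    (hX : IsNonsingularAction μ X fun t x => ENNReal.ofReal (J t x)) {ρ₀ ρ₁ : α → ℝ}
    (hρ₀m : Measurable ρ₀) (hρ₁m : Measurable ρ₁) (hρ₀ : ∀ x, 0 < ρ₀ x) (hρ₁ : ∀ x, 0 ≤ ρ₁ x)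
    (hρ₁int : Integrable ρ₁ μ) (horbit : ∀ᵐ x ∂μ, Integrable (fun t => ρ₀ (X t x) * J t x) ν) :
    ∫ x, ρ₁ x ∂μ =
      ∫ x, ρ₀ x * ((∫ t, ρ₁ (X t x) * J t x ∂ν) / ∫ t, ρ₀ (X t x) * J t x ∂ν) ∂μ := by
  have hρ₀nonneg (x : α) : 0 ≤ ρ₀ x := (hρ₀ x).le
  set D := orbitIntegral ν X (fun t x => ENNReal.ofReal (J t x)) fun x => ENNReal.ofReal (ρ₀ x)
  set N := orbitIntegral ν X (fun t x => ENNReal.ofReal (J t x)) fun x => ENNReal.ofReal (ρ₁ x)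
  have hDm : Measurable D := hX.measurable_orbitIntegral hρ₀m.ennreal_ofReal
  have hNm : Measurable N := hX.measurable_orbitIntegral hρ₁m.ennreal_ofReal
  have hD0 (x : α) : D x ≠ 0 :=
    hX.orbitIntegral_ne_zero hρ₀m.ennreal_ofReal (fun x => by simpa using hρ₀ x) x
  have hDtop : ∀ᵐ x ∂μ, D x ≠ ∞ :=
    horbit.mono fun x hx => orbitIntegral_ofReal_ne_top hρ₀nonneg hx
  have hmass : ∫⁻ x, ENNReal.ofReal (ρ₀ x) * (N x / D x) ∂μ = ∫⁻ x, ENNReal.ofReal (ρ₁ x) ∂μ :=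
    hX.lintegral_mul_orbitIntegral_div hρ₀m.ennreal_ofReal hρ₁m.ennreal_ofReal (.of_forall hD0)
      hDtop
  have hestm : Measurable fun x => ENNReal.ofReal (ρ₀ x) * (N x / D x) := by fun_prop
  have hfin : ∀ᵐ x ∂μ, ENNReal.ofReal (ρ₀ x) * (N x / D x) < ∞ :=
    ae_lt_top hestm (hmass.trans_ne hρ₁int.lintegral_lt_top.ne)
  rw [integral_eq_lintegral_of_nonneg_ae (.of_forall hρ₁) hρ₁m.aestronglyMeasurable, ← hmass,
    ← integral_toReal hestm.aemeasurable hfin]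
  simp only [hX.integral_eq_toReal_orbitIntegral hρ₀m hρ₀nonneg,
    hX.integral_eq_toReal_orbitIntegral hρ₁m hρ₁, ENNReal.toReal_mul, ENNReal.toReal_div,
    ENNReal.toReal_ofReal (hρ₀nonneg _), D, N]

theorem isNonsingularAction_abs_det_fderiv {G E : Type*} [AddGroup G] [MeasurableSpace G]
    [NormedAddCommGroup E] [NormedSpace ℝ E] [FiniteDimensional ℝ E] [MeasurableSpace E]
    [BorelSpace E] (μ : Measure E) [μ.IsAddHaarMeasure] {X : G → E → E}
    (hzero : ∀ x, X 0 x = x) (hadd : ∀ s t x, X (s + t) x = X s (X t x))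
    (hdiff : ∀ t, Differentiable ℝ (X t)) (hXm : Measurable (uncurry X))
    (hdetm : Measurable (uncurry fun t x => (fderiv ℝ (X t) x).det)) :
    IsNonsingularAction μ X fun t x => ENNReal.ofReal |(fderiv ℝ (X t) x).det| where
  zero_apply := hzero
  add_apply := hadd
  measurable := hXm
  jacobian_zero x := by
    have hid : X 0 = id := funext hzero
    simp [hid, ContinuousLinearMap.det]
  jacobian_add s t x := by
    have hcomp : X (s + t) = X s ∘ X t := funext (hadd s t)
    rw [hcomp, fderiv_comp x (hdiff s _) (hdiff t x), ← ENNReal.ofReal_mul (abs_nonneg _),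
      ← abs_mul]
    simp [ContinuousLinearMap.det, LinearMap.det_comp]
  measurable_jacobian := (measurable_abs.comp hdetm).ennreal_ofReal
  map_withDensity_jacobian t := by
    have hinj : Injective (X t) := LeftInverse.injective (g := X (-t)) fun x => by
      rw [← hadd, neg_add_cancel, hzero]
    have hsurj : Surjective (X t) := fun y => ⟨X (-t) y, by rw [← hadd, add_neg_cancel, hzero]⟩
    simpa only [Measure.restrict_univ, Set.image_univ, hsurj.range_eq] using
      map_withDensity_abs_det_fderiv_eq_addHaar μ MeasurableSet.univ.nullMeasurableSet
        (fun x _ => (hdiff t x).hasFDerivAt.hasFDerivWithinAt) hinj.injOn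

section Flow

variable {d : ℕ} {b : Euc d → Euc d} {X : ℝ → Euc d → Euc d}

lemma continuous_vdiv (hb : ContDiff ℝ 1 b) : Continuous (vdiv b) :=
  ((LinearMap.trace ℝ (Euc d)).comp (ContinuousLinearMap.coeLM ℝ)).continuous_of_finiteDimensional
    |>.comp (hb.continuous_fderiv one_ne_zero)

namespace IsGlobalFlow

lemma continuous_time (hX : IsGlobalFlow b X) (x : Euc d) : Continuous fun t => X t x :=
  continuous_iff_continuousAt.2 fun t => (hX.2.2 x t).continuousAt

lemma continuous_jac_time (hX : IsGlobalFlow b X) (hb : ContDiff ℝ 1 b) (x : Euc d) :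
    Continuous fun t => Jac b X t x :=
  Real.continuous_exp.comp <| intervalIntegral.continuous_primitive
    (fun _ _ => ((continuous_vdiv hb).comp (hX.continuous_time x)).intervalIntegrable _ _) 0

theorem isNonsingularAction (hX : IsGlobalFlow b X) (hb : ContDiff ℝ 1 b)
    (hdiff : ∀ t, Differentiable ℝ (X t))
    (hdet : ∀ t x, (fderiv ℝ (X t) x).det = Jac b X t x) :
    IsNonsingularAction volume X fun t x => ENNReal.ofReal (Jac b X t x) := by
  have hdetm (t : ℝ) : Measurable fun x => (fderiv ℝ (X t) x).det :=
    ContinuousLinearMap.continuous_det.measurable.comp (measurable_fderiv ℝ (X t))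
  have haction := isNonsingularAction_abs_det_fderiv volume hX.1 hX.2.1 hdiff
    (measurable_uncurry_of_continuous_of_measurable hX.continuous_time
      fun t => (hdiff t).continuous.measurable)
    (measurable_uncurry_of_continuous_of_measurable
      (fun x => by simpa only [hdet] using hX.continuous_jac_time hb x) hdetm)
  simpa only [hdet, Jac, Real.abs_exp] using haction

end IsGlobalFlow

end Flow

lemma integrable_of_integrableOn_Iio_Ioi {E : Type*} [NormedAddCommGroup E] {f : ℝ → E} {a : ℝ}
    (hIio : IntegrableOn f (Set.Iio a)) (hIoi : IntegrableOn f (Set.Ioi a)) : Integrable f := by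
  rw [← integrableOn_univ, ← Set.Iic_union_Ioi (a := a)]
  exact ((integrableOn_Iic_iff_integrableOn_Iio).2 hIio).union hIoi

/-- Infinite-time unbiasedness of the NEIS estimator (Proposition 2.1, infinite-time case). -/
theorem stmt_1 {d : ℕ} (hd : 0 < d)
    (U0 U1 : Euc d → ℝ) (hU0c : Continuous U0) (hU1c : Continuous U1)
    (hnorm : (∫ x : Euc d, Real.exp (-(U0 x))) = 1)
    (hZ1 : Integrable (fun x : Euc d => Real.exp (-(U1 x))))
    (b : Euc d → Euc d) (hb : Admissible b)
    (X : ℝ → Euc d → Euc d) (hX : IsGlobalFlow b X)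
    (hdiff : ∀ t : ℝ, ContDiff ℝ 1 (fun x => X t x))
    (hdet : ∀ (t : ℝ) (x : Euc d), (fderiv ℝ (fun y => X t y) x).det = Jac b X t x)
    (Ω₀ : Set (Euc d)) (hΩopen : IsOpen Ω₀) (hΩfull : volume Ω₀ᶜ = 0)
    (hint : ∀ U : Euc d → ℝ, (U = U0 ∨ U = U1) →
      (∀ z ∈ Ω₀, IntegrableOn (fun t : ℝ => Real.exp (-(U (X t z))) * Jac b X t z) (Set.Ioi 0)) ∧
      (∀ z ∈ Ω₀, IntegrableOn (fun t : ℝ => Real.exp (-(U (X t z))) * Jac b X t z) (Set.Iio 0)) ∧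
      ContinuousOn (fun z => ∫ t in Set.Ioi (0:ℝ), Real.exp (-(U (X t z))) * Jac b X t z) Ω₀ ∧
      ContinuousOn (fun z => ∫ t in Set.Iio (0:ℝ), Real.exp (-(U (X t z))) * Jac b X t z) Ω₀) :
    (∫ x : Euc d, Real.exp (-(U1 x))) =
      ∫ x : Euc d, Real.exp (-(U0 x)) *
        ((∫ t : ℝ, Real.exp (-(U1 (X t x))) * Jac b X t x) /
          (∫ t : ℝ, Real.exp (-(U0 (X t x))) * Jac b X t x)) := by
  refine stmt_1_general
    (hX.isNonsingularAction hb.1 (fun t => (hdiff t).differentiable one_ne_zero) hdet) (by fun_prop)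
    (by fun_prop) (fun x => Real.exp_pos _) (fun x => (Real.exp_pos _).le) hZ1 ?_
  filter_upwards [mem_ae_iff.2 hΩfull] with z hz using
    integrable_of_integrableOn_Iio_Ioi ((hint U0 (.inl rfl)).2.1 z hz)
      ((hint U0 (.inl rfl)).1 z hz)
end
end

section
/- Bounded sojourn time in nearly-constant-velocity regions (Lemma A.6). Let b : ℝ^d → ℝ^d be continuous with a global flow X. Let D ⊆ ℝ^d be a bounded set and suppose there exist x* ∈ D and ζ ∈ (0,1) such that ‖b(x*)‖ > 0 and ‖b(x) − b(x*)‖ < ζ·‖b(x*)‖ for all x ∈ D. Then for every x ∈ ℝ^d and all real numbers s ≤ t such that X r x ∈ D for every r ∈ [s, t], one has t − s ≤ diam(D) / ((1 − ζ)·‖b(x*)‖), where diam(D) denotes the metric diameter of D. -/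
/-!
A curve whose velocity stays within `C` of a constant vector `v` deviates from uniform motion with
velocity `v` at speed at most `C`. By the mean value inequality and the triangle inequality, its
displacement grows at rate at least `‖v‖ - C`. Inside a bounded set the displacement is at most the
diameter, which bounds the time spent there.
-/

open MeasureTheory Filter

noncomputable section

section MeanValue

variable {𝕜 E : Type*} [RCLike 𝕜] [NormedAddCommGroup E] [NormedSpace 𝕜 E]
  {f f' : 𝕜 → E} {J : Set 𝕜} {x y : 𝕜} {v : E} {C : ℝ}

theorem norm_image_sub_sub_smul_le_of_norm_hasDerivWithin_sub_le
    (hf : ∀ z ∈ J, HasDerivWithinAt f (f' z) J z) (bound : ∀ z ∈ J, ‖f' z - v‖ ≤ C)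
    (hJ : Convex ℝ J) (hx : x ∈ J) (hy : y ∈ J) :
    ‖f y - f x - (y - x) • v‖ ≤ C * ‖y - x‖ := by
  have hderiv : ∀ z ∈ J, HasDerivWithinAt (fun w ↦ f w - w • v) (f' z - v) J z := fun z hz ↦ by
    simpa only [one_smul, id_eq] using (hf z hz).fun_sub ((hasDerivWithinAt_id z J).smul_const v)
  calc
    ‖f y - f x - (y - x) • v‖ = ‖(f y - y • v) - (f x - x • v)‖ := by
      rw [sub_smul, sub_sub_sub_comm]
    _ ≤ C * ‖y - x‖ := hJ.norm_image_sub_le_of_norm_hasDerivWithin_le hderiv bound hx hy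

theorem mul_norm_sub_le_norm_image_sub_of_norm_hasDerivWithin_sub_le
    (hf : ∀ z ∈ J, HasDerivWithinAt f (f' z) J z) (bound : ∀ z ∈ J, ‖f' z - v‖ ≤ C)
    (hJ : Convex ℝ J) (hx : x ∈ J) (hy : y ∈ J) :
    (‖v‖ - C) * ‖y - x‖ ≤ ‖f y - f x‖ := by
  have hdev := norm_image_sub_sub_smul_le_of_norm_hasDerivWithin_sub_le hf bound hJ hx hy
  have htri : ‖y - x‖ * ‖v‖ ≤ ‖f y - f x‖ + ‖f y - f x - (y - x) • v‖ := by
    simpa only [norm_smul] using norm_le_norm_add_norm_sub (f y - f x) ((y - x) • v)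
  linarith

end MeanValue

theorem stmt_10_general {E : Type*} [NormedAddCommGroup E] [NormedSpace ℝ E]
    {b : ℝ → E → E} {γ : ℝ → E} {J : Set ℝ} {D : Set E} {v : E} {C : ℝ}
    (hγ : IsIntegralCurveOn γ b J) (hJ : Convex ℝ J) (hγD : Set.MapsTo γ J D)
    (hD : Bornology.IsBounded D) (hCv : C < ‖v‖) (hb : ∀ r ∈ J, ∀ x ∈ D, ‖b r x - v‖ ≤ C)
    {s t : ℝ} (hs : s ∈ J) (ht : t ∈ J) :
    |t - s| ≤ Metric.diam D / (‖v‖ - C) := by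
  rw [le_div_iff₀' (sub_pos.2 hCv)]
  calc
    (‖v‖ - C) * |t - s| ≤ ‖γ t - γ s‖ :=
      mul_norm_sub_le_norm_image_sub_of_norm_hasDerivWithin_sub_le hγ
        (fun r hr ↦ hb r hr _ (hγD hr)) hJ hs ht
    _ = dist (γ t) (γ s) := (dist_eq_norm _ _).symm
    _ ≤ Metric.diam D := Metric.dist_le_diam_of_mem hD (hγD ht) (hγD hs)

theorem IsGlobalFlow.isIntegralCurve {d : ℕ} {b : Euc d → Euc d} {X : ℝ → Euc d → Euc d}
    (hX : IsGlobalFlow b X) (x : Euc d) : IsIntegralCurve (X · x) (fun _ ↦ b) :=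
  hX.2.2 x

/-- Bounded sojourn time in nearly-constant-velocity regions (Lemma A.6). -/
theorem stmt_10 {d : ℕ} (hd : 0 < d)
    (b : Euc d → Euc d) (hbc : Continuous b)
    (X : ℝ → Euc d → Euc d) (hX : IsGlobalFlow b X)
    (D : Set (Euc d)) (hD : Bornology.IsBounded D)
    (xs : Euc d) (hxs : xs ∈ D) (ζ : ℝ) (hζ0 : 0 < ζ) (hζ1 : ζ < 1)
    (hbxs : 0 < ‖b xs‖) (hclose : ∀ x ∈ D, ‖b x - b xs‖ < ζ * ‖b xs‖) :
    ∀ x : Euc d, ∀ s t : ℝ, s ≤ t → (∀ r ∈ Set.Icc s t, X r x ∈ D) →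
      t - s ≤ Metric.diam D / ((1 - ζ) * ‖b xs‖) := by
  intro x s t hst hr
  rw [sub_mul, one_mul]
  exact (le_abs_self _).trans <| stmt_10_general ((hX.isIntegralCurve x).isIntegralCurveOn _)
    (convex_Icc s t) hr hD (mul_lt_of_lt_one_left hbxs hζ1) (fun _ _ y hy ↦ (hclose y hy).le)
    (Set.left_mem_Icc.2 hst) (Set.right_mem_Icc.2 hst)
end
end
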